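/- Fix c ∈ ℂ with c ≠ 0 and N ≥ 1. Let μ_1,…,μ_N and pairwise distinct λ_1,…,λ_N be complex numbers satisfying μ_k ≠ λ_j and λ_m−λ_j±ic ≠ 0, let λ_p, λ_s be admissible auxiliary parameters, and assume P_λ = P_μ, where P_λ = Σ_j λ_j and P_μ = Σ_j μ_j. Then (−1)^N (𝒥/(6c))·Π·∏_{j=1}^{N}(V⁺_j−V⁻_j)·det_N(δ_{jk}+U_{jk})/[(V⁺_p−V⁻_p)(V⁺_s−V⁻_s)] = (−1)^{N+1}·[i(E_λ−E_μ)²/(2Nc)]·Π·∏_{j=1}^{N}(V⁺_j−V⁻_j)·det_N(δ_{jk}+U^{(2)}_{jk})/(V⁺_p−V⁻_p), where Π = ∏_{j,k=1}^{N}(λ_j−λ_k+ic)·∏_{j,k=1}^{N}(λ_j−μ_k)^{−1}, and where under the assumption P_λ = P_μ one has 𝒥 = 3(E_λ−E_μ)². -/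

import Mathlib

open Complex Finset Matrix

namespace LL

noncomputable def Kk (c x y : ℂ) : ℂ := 2 * c / ((x - y) ^ 2 + c ^ 2)

noncomputable def Vp {N M : ℕ} (c : ℂ) (μ : Fin N → ℂ) (lam : Fin M → ℂ) (x : ℂ) : ℂ :=
  (∏ m, (μ m - x + I * c)) / ∏ m, (lam m - x + I * c)

noncomputable def Vm {N M : ℕ} (c : ℂ) (μ : Fin N → ℂ) (lam : Fin M → ℂ) (x : ℂ) : ℂ :=
  (∏ m, (μ m - x - I * c)) / ∏ m, (lam m - x - I * c)

noncomputable def Xi {N M : ℕ} (μ : Fin N → ℂ) (lam : Fin M → ℂ) (j : Fin M) : ℂ :=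
  (∏ m, (μ m - lam j)) / ∏ m ∈ Finset.univ.erase j, (lam m - lam j)

noncomputable def Umat {N M : ℕ} (c : ℂ) (μ : Fin N → ℂ) (lam : Fin M → ℂ) (lp ls : ℂ) :
    Matrix (Fin M) (Fin M) ℂ := fun j k =>
  I / (Vp c μ lam (lam j) - Vm c μ lam (lam j)) * Xi μ lam j *
    (Kk c (lam j) (lam k) - Kk c lp (lam k) * Kk c ls (lam j))

noncomputable def U1mat {N M : ℕ} (c : ℂ) (μ : Fin N → ℂ) (lam : Fin M → ℂ) (lp : ℂ) :
    Matrix (Fin M) (Fin M) ℂ := fun j k =>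
  I / (Vp c μ lam (lam j) - Vm c μ lam (lam j)) * Xi μ lam j *
    (Kk c (lam j) (lam k) - Kk c lp (lam k))

noncomputable def U2mat {N M : ℕ} (c : ℂ) (μ : Fin N → ℂ) (lam : Fin M → ℂ) (lp : ℂ) :
    Matrix (Fin M) (Fin M) ℂ := fun j k =>
  U1mat c μ lam lp j k + I / (Vp c μ lam (lam j) - Vm c μ lam (lam j)) * Kk c lp (lam k)

noncomputable def HR {N M : ℕ} (c sc : ℂ) (R : ℕ) (μ : Fin N → ℂ) (lam : Fin M → ℂ)
    (lp ls : ℂ) : ℂ :=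
  (I * sc) ^ R / (c ^ (2 * R - 1) * ((R - 1).factorial : ℂ)) * (-1 : ℂ) ^ (N * (R - 1)) *
    (∏ j, ∏ k, (lam j - lam k + I * c)) *
    (∏ j, ∏ k, (lam j - μ k)⁻¹) *
    (∏ j, (Vp c μ lam (lam j) - Vm c μ lam (lam j))) *
    (1 + Umat c μ lam lp ls).det /
    ((Vp c μ lam lp - Vm c μ lam lp) * (Vp c μ lam ls - Vm c μ lam ls))

noncomputable def Jcal {N : ℕ} (μ lam : Fin N → ℂ) : ℂ :=
  (∑ j, lam j - ∑ j, μ j) ^ 4 -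
    4 * (∑ j, lam j - ∑ j, μ j) * (∑ j, lam j ^ 3 - ∑ j, μ j ^ 3) +
    3 * (∑ j, lam j ^ 2 - ∑ j, μ j ^ 2) ^ 2

noncomputable def Fff {N : ℕ} (c : ℂ) (μ lam : Fin N → ℂ) (lp ls : ℂ) : ℂ :=
  (-1 : ℂ) ^ N * (Jcal μ lam / (6 * c)) *
    (∏ j, ∏ k, (lam j - lam k + I * c)) *
    (∏ j, ∏ k, (lam j - μ k)⁻¹) *
    (∏ j, (Vp c μ lam (lam j) - Vm c μ lam (lam j))) *
    (1 + Umat c μ lam lp ls).det /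
    ((Vp c μ lam lp - Vm c μ lam lp) * (Vp c μ lam ls - Vm c μ lam ls))

noncomputable def Tcal {N M : ℕ} (μ : Fin N → ℂ) (lam : Fin M → ℂ) : ℂ :=
  (1 / 2 : ℂ) * ((∑ j, lam j - ∑ j, μ j) ^ 2 - (∑ j, lam j ^ 2 - ∑ j, μ j ^ 2))

noncomputable def Gff {N M : ℕ} (c sc : ℂ) (μ : Fin N → ℂ) (lam : Fin M → ℂ) (lp ls : ℂ) : ℂ :=
  -I * (Tcal μ lam / (c * sc)) *
    (∏ j, ∏ k, (lam j - lam k + I * c)) *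
    (∏ j, ∏ k, (lam j - μ k)⁻¹) *
    (∏ j, (Vp c μ lam (lam j) - Vm c μ lam (lam j))) *
    (1 + Umat c μ lam lp ls).det /
    ((Vp c μ lam lp - Vm c μ lam lp) * (Vp c μ lam ls - Vm c μ lam ls))

noncomputable def fsc (c x y : ℂ) : ℂ := (x - y + I * c) / (x - y)

noncomputable def stringRap (cb : ℝ) (M : ℕ) (δ : Fin M → ℂ) (j : Fin M) : ℂ :=
  I * ((cb : ℂ) / 2) * ((M : ℂ) - 1 - 2 * (j.val : ℂ)) + I * δ j

end LL

open LL

/-!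
For distinct nodes `λ_j`, the rational function `f z = ∏ (z - μ_m) / ∏ (z - λ_m)` has the partial
fraction expansion `f z = 1 - ∑ Ξ_j / (z - λ_j)`. Its `1 / z` coefficient at infinity gives
`∑ Ξ_j = P_μ - P_λ`, and evaluating it at `x ± ic` gives `V⁺_x - V⁻_x = -i ∑ Ξ_k K(x, λ_k)`.

At `x = λ_k` the latter says that the row vector `d_j = V⁺_j - V⁻_j` annihilates the common part
`A = 1 + (i Ξ_j / d_j) K(λ_j, λ_k)` of the two matrices, both of which have the form `A - u vᵀ` with
`v_k = K(λ_p, λ_k)`. When `d A = 0`, the determinant of `A - u vᵀ` depends on `u` only through the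
factor `d ⬝ u`, which equals `-(V⁺_s - V⁻_s)` for `U` and `-i (N + P_λ - P_μ)` for `U⁽²⁾`.
-/

namespace LL

section LeftKernel

variable {n R : Type*} [Fintype n] [DecidableEq n] [CommRing R]

theorem mul_det_sub_vecMulVec_of_vecMul_eq_zero {A : Matrix n n R} {d : n → R}
    (hA : d ᵥ* A = 0) (u v : n → R) (j : n) :
    d j * (A - vecMulVec u v).det = -(d ⬝ᵥ u) * (A.updateRow j v).det := by
  set B := A - vecMulVec u v with hB
  have row_comb : ∑ k, d k • B k = -(d ⬝ᵥ u) • v := by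
    rw [← vecMul_eq_sum, hB, vecMul_sub, hA, vecMul_vecMulVec, zero_sub, neg_smul]
  have clear_rows : (B.updateRow j v).det = (A.updateRow j v).det := by
    refine det_eq_of_forall_row_eq_smul_add_const (Function.update (-u) j 0) j (by simp) ?_
    intro i k
    obtain rfl | hij := eq_or_ne i j
    · simp
    · simp [hB, hij, vecMulVec_apply, sub_eq_add_neg]
  rw [← smul_eq_mul, ← det_updateRow_sum, row_comb, det_updateRow_smul, clear_rows]

theorem dotProduct_mul_det_sub_vecMulVec_comm [NoZeroDivisors R] {A : Matrix n n R} {d : n → R}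
    (hA : d ᵥ* A = 0) (u w v : n → R) :
    (d ⬝ᵥ w) * (A - vecMulVec u v).det = (d ⬝ᵥ u) * (A - vecMulVec w v).det := by
  obtain rfl | hd := eq_or_ne d 0
  · simp
  obtain ⟨j, hj⟩ := Function.ne_iff.mp hd
  refine mul_left_cancel₀ hj ?_
  rw [mul_left_comm, mul_left_comm (d j), mul_det_sub_vecMulVec_of_vecMul_eq_zero hA,
    mul_det_sub_vecMulVec_of_vecMul_eq_zero hA]
  ring

end LeftKernel

theorem dotProduct_div_mul {n K : Type*} [Fintype n] [Semifield K] {d : n → K} (hd : ∀ j, d j ≠ 0)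
    (a : K) (b : n → K) : (d ⬝ᵥ fun j => a / d j * b j) = a * ∑ j, b j := by
  rw [dotProduct, Finset.mul_sum]
  exact Finset.sum_congr rfl fun j _ => by rw [← mul_assoc, mul_div_cancel₀ _ (hd j)]

section PartialFractions

open Polynomial Lagrange

section CommRing

variable {R ι : Type*} [CommRing R] {s : Finset ι} {v : ι → R} {P : R[X]}

theorem degree_sub_nodal_lt [Nontrivial R] (hP : P.Monic) (hdeg : P.degree = #s) :
    (P - nodal s v).degree < #s := by
  rw [← degree_nodal (s := s) (v := v)] at hdeg ⊢
  exact degree_sub_lt_right hdeg nodal_ne_zero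
    (hP.leadingCoeff.trans nodal_monic.leadingCoeff.symm)

theorem eval_sub_nodal_at_node {i : ι} (hi : i ∈ s) :
    (P - nodal s v).eval (v i) = P.eval (v i) := by
  rw [eval_sub, eval_nodal_at_node hi, sub_zero]

end CommRing

variable {F ι : Type*} [Field F] [DecidableEq ι] {s : Finset ι} {v : ι → F} {P : F[X]}

theorem sum_nodalWeight_mul_eval (hv : Set.InjOn v s) (hP : P.Monic) (hdeg : P.degree = #s) :
    ∑ i ∈ s, nodalWeight s v i * P.eval (v i) = P.nextCoeff + ∑ i ∈ s, v i := by
  obtain rfl | hs := s.eq_empty_or_nonempty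
  · simp [nextCoeff, natDegree_eq_of_degree_eq_some hdeg]
  have hcard : 0 < #s := hs.card_pos
  calc ∑ i ∈ s, nodalWeight s v i * P.eval (v i)
      = ∑ i ∈ s, (P - nodal s v).eval (v i) / ∏ j ∈ s.erase i, (v i - v j) :=
        Finset.sum_congr rfl fun i hi => by
          rw [eval_sub_nodal_at_node hi, nodalWeight, Finset.prod_inv_distrib, div_eq_inv_mul]
    _ = (P - nodal s v).coeff (#s - 1) := (coeff_eq_sum hv (degree_sub_nodal_lt hP hdeg)).symm
    _ = P.nextCoeff + ∑ i ∈ s, v i := by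
        have hnat : P.natDegree = #s := natDegree_eq_of_degree_eq_some hdeg
        rw [coeff_sub, nodal_eq, prod_X_sub_C_coeff_card_pred _ _ hcard, sub_neg_eq_add,
          nextCoeff_of_natDegree_pos (hnat ▸ hcard), hnat]

theorem eval_div_eval_nodal (hv : Set.InjOn v s) (hP : P.Monic) (hdeg : P.degree = #s) {z : F}
    (hz : ∀ i ∈ s, z ≠ v i) :
    P.eval z / (nodal s v).eval z =
      1 + ∑ i ∈ s, nodalWeight s v i * P.eval (v i) * (z - v i)⁻¹ := by
  have interp : P.eval z - (nodal s v).eval z =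
      (nodal s v).eval z * ∑ i ∈ s, nodalWeight s v i * (z - v i)⁻¹ * P.eval (v i) := by
    rw [← eval_sub, eq_interpolate hv (degree_sub_nodal_lt hP hdeg),
      eval_interpolate_not_at_node _ hz]
    congr 1
    exact Finset.sum_congr rfl fun i hi => by rw [eval_sub_nodal_at_node hi]
  rw [div_eq_iff (eval_nodal_not_at_node hz), add_mul, one_mul, ← sub_eq_iff_eq_add', interp,
    mul_comm]
  simp only [mul_right_comm]

end PartialFractions

theorem sq_add_sq_eq_mul (a c : ℂ) : a ^ 2 + c ^ 2 = (a + I * c) * (a - I * c) := by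
  linear_combination c ^ 2 * I_sq

theorem Kk_comm (c x y : ℂ) : Kk c x y = Kk c y x := by
  rw [Kk, Kk, ← neg_sub, neg_sq]

theorem I_mul_Kk {c x y : ℂ} (h : (x - y) ^ 2 + c ^ 2 ≠ 0) :
    I * Kk c x y = (x - I * c - y)⁻¹ - (x + I * c - y)⁻¹ := by
  rw [sq_add_sq_eq_mul] at h
  have hadd : x + I * c - y ≠ 0 := by convert left_ne_zero_of_mul h using 1; ring
  have hsub : x - I * c - y ≠ 0 := by convert right_ne_zero_of_mul h using 1; ring
  have hfac : (x - y) ^ 2 + c ^ 2 = (x - I * c - y) * (x + I * c - y) := by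
    rw [sq_add_sq_eq_mul]; ring
  rw [Kk, hfac]
  field_simp
  ring

section UnequalSizes

variable {N M : ℕ} (c : ℂ) (μ : Fin N → ℂ) (lam : Fin M → ℂ)

theorem Vm_eq_Vp_neg (x : ℂ) : Vm c μ lam x = Vp (-c) μ lam x := by
  simp only [Vm, Vp, mul_neg, ← sub_eq_add_neg]

/-- The vector of the differences `V⁺_j - V⁻_j`, used as a left null vector. -/
noncomputable def Vdiff (j : Fin M) : ℂ :=
  Vp c μ lam (lam j) - Vm c μ lam (lam j)

/-- The part `δ_{jk} + (i Ξ_j / (V⁺_j - V⁻_j)) K(λ_j, λ_k)` of `1 + U` and `1 + U⁽²⁾` that does not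
involve the auxiliary parameters. -/
noncomputable def coreMatrix : Matrix (Fin M) (Fin M) ℂ :=
  1 + of fun j k => I / Vdiff c μ lam j * (Xi μ lam j * Kk c (lam j) (lam k))

theorem one_add_Umat_eq (lp ls : ℂ) :
    1 + Umat c μ lam lp ls = coreMatrix c μ lam -
      vecMulVec (fun j => I / Vdiff c μ lam j * (Xi μ lam j * Kk c ls (lam j)))
        (fun k => Kk c lp (lam k)) := by
  ext j k
  simp only [coreMatrix, Vdiff, Umat, Matrix.add_apply, Matrix.sub_apply, vecMulVec_apply,
    of_apply]
  ring

theorem one_add_U2mat_eq (lp : ℂ) :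
    1 + U2mat c μ lam lp = coreMatrix c μ lam -
      vecMulVec (fun j => I / Vdiff c μ lam j * (Xi μ lam j - 1)) (fun k => Kk c lp (lam k)) := by
  ext j k
  simp only [coreMatrix, Vdiff, U2mat, U1mat, Matrix.add_apply, Matrix.sub_apply,
    vecMulVec_apply, of_apply]
  ring

end UnequalSizes

section EqualSizes

open Lagrange

variable {N : ℕ} (c : ℂ) (μ lam : Fin N → ℂ)

theorem Xi_eq_neg_nodalWeight_mul (j : Fin N) :
    Xi μ lam j = -(nodalWeight univ lam j * (nodal univ μ).eval (lam j)) := by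
  simp only [Xi, nodalWeight, eval_nodal, ← neg_sub (lam j), Finset.prod_neg,
    Finset.prod_inv_distrib]
  rw [← Finset.card_erase_add_one (mem_univ j), pow_succ, mul_assoc,
    mul_div_mul_left _ _ (pow_ne_zero _ (neg_ne_zero.2 one_ne_zero))]
  ring

theorem Vp_eq_eval_nodal_div (x : ℂ) :
    Vp c μ lam x = (nodal univ μ).eval (x - I * c) / (nodal univ lam).eval (x - I * c) := by
  have flip : ∀ a, a - x + I * c = -(x - I * c - a) := fun a => by ring
  simp only [Vp, flip, Finset.prod_neg, eval_nodal]
  exact mul_div_mul_left _ _ (pow_ne_zero _ (neg_ne_zero.2 one_ne_zero))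

variable {c μ lam} {x : ℂ}

theorem sum_Xi (hinj : Function.Injective lam) :
    ∑ j, Xi μ lam j = ∑ j, μ j - ∑ j, lam j := by
  simp only [Xi_eq_neg_nodalWeight_mul, Finset.sum_neg_distrib]
  rw [sum_nodalWeight_mul_eval hinj.injOn nodal_monic degree_nodal, nodal_eq,
    Polynomial.prod_X_sub_C_nextCoeff]
  ring

theorem Vp_eq_one_sub_sum_Xi (hinj : Function.Injective lam) (hx : ∀ j, x - I * c ≠ lam j) :
    Vp c μ lam x = 1 - ∑ j, Xi μ lam j * (x - I * c - lam j)⁻¹ := by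
  rw [Vp_eq_eval_nodal_div, eval_div_eval_nodal hinj.injOn nodal_monic degree_nodal
    fun j _ => hx j]
  simp only [Xi_eq_neg_nodalWeight_mul, neg_mul, Finset.sum_neg_distrib, sub_neg_eq_add]

theorem Vp_sub_Vm (hinj : Function.Injective lam) (hx : ∀ j, (x - lam j) ^ 2 + c ^ 2 ≠ 0) :
    Vp c μ lam x - Vm c μ lam x = -(I * ∑ j, Xi μ lam j * Kk c x (lam j)) := by
  have hx' : ∀ j, (x - lam j + I * c) * (x - lam j - I * c) ≠ 0 := fun j =>
    sq_add_sq_eq_mul (x - lam j) c ▸ hx j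
  have hsub : ∀ j, x - I * c ≠ lam j := fun j h =>
    right_ne_zero_of_mul (hx' j) (by rw [← h]; ring)
  have hadd : ∀ j, x - I * -c ≠ lam j := fun j h =>
    left_ne_zero_of_mul (hx' j) (by rw [← h]; ring)
  rw [Vm_eq_Vp_neg, Vp_eq_one_sub_sum_Xi hinj hsub, Vp_eq_one_sub_sum_Xi hinj hadd,
    sub_sub_sub_cancel_left, ← neg_sub, ← Finset.sum_sub_distrib, Finset.mul_sum]
  refine congrArg _ (Finset.sum_congr rfl fun j _ => ?_)
  rw [mul_left_comm, I_mul_Kk (hx j)]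
  simp only [mul_neg, sub_neg_eq_add, mul_sub]

theorem Vdiff_vecMul_coreMatrix (hinj : Function.Injective lam)
    (hlam : ∀ j k, (lam j - lam k) ^ 2 + c ^ 2 ≠ 0) (hd : ∀ j, Vdiff c μ lam j ≠ 0) :
    Vdiff c μ lam ᵥ* coreMatrix c μ lam = 0 := by
  ext k
  have hcol : (Vdiff c μ lam ᵥ*
      of fun j k => I / Vdiff c μ lam j * (Xi μ lam j * Kk c (lam j) (lam k))) k =
      I * ∑ j, Xi μ lam j * Kk c (lam k) (lam j) := by
    simp only [Kk_comm c (lam k)]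
    exact dotProduct_div_mul hd I _
  rw [coreMatrix, vecMul_add, vecMul_one, Pi.add_apply, hcol, Vdiff, Vp_sub_Vm hinj (hlam k),
    neg_add_cancel, Pi.zero_apply]

theorem mul_det_one_add_Umat (hinj : Function.Injective lam)
    (hlam : ∀ j k, (lam j - lam k) ^ 2 + c ^ 2 ≠ 0) (hd : ∀ j, Vdiff c μ lam j ≠ 0)
    (lp : ℂ) {ls : ℂ} (hs : ∀ j, (ls - lam j) ^ 2 + c ^ 2 ≠ 0) :
    (N + ∑ j, lam j - ∑ j, μ j) * (1 + Umat c μ lam lp ls).det =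
      -I * (Vp c μ lam ls - Vm c μ lam ls) * (1 + U2mat c μ lam lp).det := by
  have h := dotProduct_mul_det_sub_vecMulVec_comm (Vdiff_vecMul_coreMatrix hinj hlam hd)
    (fun j => I / Vdiff c μ lam j * (Xi μ lam j * Kk c ls (lam j)))
    (fun j => I / Vdiff c μ lam j * (Xi μ lam j - 1)) (fun k => Kk c lp (lam k))
  rw [← one_add_Umat_eq, ← one_add_U2mat_eq, dotProduct_div_mul hd, dotProduct_div_mul hd,
    Finset.sum_sub_distrib, sum_Xi hinj, Finset.sum_const, card_univ, Fintype.card_fin,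
    nsmul_one] at h
  rw [Vp_sub_Vm hinj hs]
  linear_combination
    I * h + (N + ∑ j, lam j - ∑ j, μ j) * (1 + Umat c μ lam lp ls).det * I_sq

end EqualSizes

theorem Jcal_eq_of_sum_eq {N : ℕ} {μ lam : Fin N → ℂ} (hP : ∑ j, lam j = ∑ j, μ j) :
    Jcal μ lam = 3 * (∑ j, lam j ^ 2 - ∑ j, μ j ^ 2) ^ 2 := by
  rw [Jcal, hP]
  ring

end LL

theorem F_eq_equal_momentum_general {N : ℕ} (c : ℂ)
    (μ lam : Fin N → ℂ) (hinj : Function.Injective lam)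
    (_hmulam : ∀ k j, μ k ≠ lam j)
    (hpm : ∀ j k, lam j - lam k + I * c ≠ 0 ∧ lam j - lam k - I * c ≠ 0)
    (lp ls : ℂ)
    (_hp1 : ∀ j, (lp - lam j) ^ 2 + c ^ 2 ≠ 0)
    (hs1 : ∀ j, (ls - lam j) ^ 2 + c ^ 2 ≠ 0)
    (hV : ∀ j, Vp c μ lam (lam j) ≠ Vm c μ lam (lam j))
    (hVp : Vp c μ lam lp ≠ Vm c μ lam lp)
    (hVs : Vp c μ lam ls ≠ Vm c μ lam ls)
    (hNP : N + ∑ j, lam j - ∑ j, μ j ≠ 0) :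
    (-1 : ℂ) ^ N * (Jcal μ lam / (6 * c)) *
        ((∏ j, ∏ k, (lam j - lam k + I * c)) * ∏ j, ∏ k, (lam j - μ k)⁻¹) *
        (∏ j, (Vp c μ lam (lam j) - Vm c μ lam (lam j))) *
        (1 + Umat c μ lam lp ls).det /
        ((Vp c μ lam lp - Vm c μ lam lp) * (Vp c μ lam ls - Vm c μ lam ls)) =
      (-1 : ℂ) ^ (N + 1) *
        (I * Jcal μ lam / (6 * (N + ∑ j, lam j - ∑ j, μ j) * c)) *
        ((∏ j, ∏ k, (lam j - lam k + I * c)) * ∏ j, ∏ k, (lam j - μ k)⁻¹) *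
        (∏ j, (Vp c μ lam (lam j) - Vm c μ lam (lam j))) *
        (1 + U2mat c μ lam lp).det /
        (Vp c μ lam lp - Vm c μ lam lp) := by
  have hlam : ∀ j k, (lam j - lam k) ^ 2 + c ^ 2 ≠ 0 := fun j k =>
    sq_add_sq_eq_mul _ c ▸ mul_ne_zero (hpm j k).1 (hpm j k).2
  have hdet := mul_det_one_add_Umat hinj hlam (fun j => sub_ne_zero.2 (hV j)) lp hs1
  rw [mul_comm, ← eq_div_iff hNP] at hdet
  rw [hdet, pow_succ]
  field_simp

/-- Equivalence of the two determinant formulas for the form factor of `(Ψ†(0))²Ψ²(0)`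
when the two states have equal total momentum `P_λ = P_μ` (in which case
`𝒥 = 3(E_λ−E_μ)²`). -/
theorem F_eq_equal_momentum {N : ℕ} (hN : 1 ≤ N) (c : ℂ) (hc : c ≠ 0)
    (μ lam : Fin N → ℂ) (hinj : Function.Injective lam)
    (hmulam : ∀ k j, μ k ≠ lam j)
    (hpm : ∀ j k, lam j - lam k + I * c ≠ 0 ∧ lam j - lam k - I * c ≠ 0)
    (lp ls : ℂ)
    (hp1 : ∀ j, (lp - lam j) ^ 2 + c ^ 2 ≠ 0)
    (hs1 : ∀ j, (ls - lam j) ^ 2 + c ^ 2 ≠ 0)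
    (hV : ∀ j, Vp c μ lam (lam j) ≠ Vm c μ lam (lam j))
    (hVp : Vp c μ lam lp ≠ Vm c μ lam lp)
    (hVs : Vp c μ lam ls ≠ Vm c μ lam ls)
    (hP : ∑ j, lam j = ∑ j, μ j) :
    (-1 : ℂ) ^ N * (Jcal μ lam / (6 * c)) *
        ((∏ j, ∏ k, (lam j - lam k + I * c)) * ∏ j, ∏ k, (lam j - μ k)⁻¹) *
        (∏ j, (Vp c μ lam (lam j) - Vm c μ lam (lam j))) *
        (1 + Umat c μ lam lp ls).det /
        ((Vp c μ lam lp - Vm c μ lam lp) * (Vp c μ lam ls - Vm c μ lam ls)) =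
      (-1 : ℂ) ^ (N + 1) *
        (I * (∑ j, lam j ^ 2 - ∑ j, μ j ^ 2) ^ 2 / (2 * (N : ℂ) * c)) *
        ((∏ j, ∏ k, (lam j - lam k + I * c)) * ∏ j, ∏ k, (lam j - μ k)⁻¹) *
        (∏ j, (Vp c μ lam (lam j) - Vm c μ lam (lam j))) *
        (1 + U2mat c μ lam lp).det /
        (Vp c μ lam lp - Vm c μ lam lp) := by
  have hN0 : (N : ℂ) ≠ 0 := Nat.cast_ne_zero.2 (by lia)
  rw [F_eq_equal_momentum_general c μ lam hinj hmulam hpm lp ls hp1 hs1 hV hVp hVs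
    (by simpa [hP] using hN0), Jcal_eq_of_sum_eq hP, hP, add_sub_cancel_right]
  ring
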